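/- Let y ∈ V^n be a probability vector with positive components and let k be a positive integer. The following three statements are equivalent: (1) T_k(y) = S(y); (2) M_k(y) = S(y); (3) for every d with 1 < d < n−1, either y_d^k ≥ y_1^{k−1} y_{d+1} or y_{d+1}^k ≤ y_n^{k−1} y_d. -/

import Mathlib

noncomputable section

/-- `eSum x l` : the sum of the `l` largest components of `x`. -/
def eSum {n : ℕ} (x : Fin n → ℝ) (l : ℕ) : ℝ :=
  sSup {r | ∃ s : Finset (Fin n), s.card = l ∧ r = ∑ i ∈ s, x i}

/-- `ESum x l` : the sum of the `l` smallest components of `x`. -/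
def ESum {n : ℕ} (x : Fin n → ℝ) (l : ℕ) : ℝ :=
  sInf {r | ∃ s : Finset (Fin n), s.card = l ∧ r = ∑ i ∈ s, x i}

/-- Majorization `x ≺ y` (for vectors with equal total sum):
`e_l(x) ≤ e_l(y)` for all `1 ≤ l ≤ n`. -/
def Maj {n : ℕ} (x y : Fin n → ℝ) : Prop :=
  (∑ i, x i) = (∑ i, y i) ∧ ∀ l : ℕ, 1 ≤ l → l ≤ n → eSum x l ≤ eSum y l

/-- Strict majorization `x ◁ y`: equal total sums and `e_l(x) < e_l(y)` for all
`1 ≤ l ≤ n - 1`. -/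
def SMaj {n : ℕ} (x y : Fin n → ℝ) : Prop :=
  (∑ i, x i) = (∑ i, y i) ∧ ∀ l : ℕ, 1 ≤ l → l + 1 ≤ n → eSum x l < eSum y l

/-- Super-majorization `x ≺ʷ y` : `E_l(x) ≥ E_l(y)` for all `1 ≤ l ≤ n`. -/
def SupMaj {n : ℕ} (x y : Fin n → ℝ) : Prop :=
  ∀ l : ℕ, 1 ≤ l → l ≤ n → ESum y l ≤ ESum x l

/-- Strict super-majorization `x ◁ʷ y` : `E_l(x) > E_l(y)` for all `1 ≤ l ≤ n`. -/
def SSupMaj {n : ℕ} (x y : Fin n → ℝ) : Prop :=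
  ∀ l : ℕ, 1 ≤ l → l ≤ n → ESum y l < ESum x l

/-- Tensor product of two vectors: the vector of all pairwise products. -/
def tensor {m k : ℕ} (x : Fin m → ℝ) (c : Fin k → ℝ) : Fin (m * k) → ℝ :=
  fun i => x (finProdFinEquiv.symm i).1 * c (finProdFinEquiv.symm i).2

/-- `k`-fold tensor power of a vector. -/
def tpow {n : ℕ} (x : Fin n → ℝ) (k : ℕ) : Fin (n ^ k) → ℝ :=
  fun i => ∏ j : Fin k, x (finFunctionFinEquiv.symm i j)

/-- `V^n` : probability vectors with components in non-increasing order. -/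
def Vn (n : ℕ) : Set (Fin n → ℝ) :=
  {x | (∀ i, 0 ≤ x i) ∧ (∑ i, x i) = 1 ∧ Antitone x}

/-- `S(y)` : members of `V^n` majorized by `y`. -/
def Sset {n : ℕ} (y : Fin n → ℝ) : Set (Fin n → ℝ) :=
  {x ∈ Vn n | Maj x y}

/-- `T(y,c)` : members of `V^n` with `x ⊗ c ≺ y ⊗ c`. -/
def Tcat {n k : ℕ} (y : Fin n → ℝ) (c : Fin k → ℝ) : Set (Fin n → ℝ) :=
  {x ∈ Vn n | Maj (tensor x c) (tensor y c)}

/-- Local uniformity `l_u(c)` : the minimum of the consecutive ratios `c_{i+1}/c_i`. -/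
def lu {k : ℕ} (c : Fin k → ℝ) : ℝ :=
  sInf {r | ∃ i : ℕ, ∃ h : i + 1 < k, r = c ⟨i + 1, h⟩ / c ⟨i, Nat.lt_of_succ_lt h⟩}

/-- Global uniformity `g_u(c) = c_k / c_1` (smallest over largest component of a
non-increasingly ordered vector). -/
def gu {k : ℕ} (c : Fin k → ℝ) : ℝ :=
  if h : 0 < k then c ⟨k - 1, Nat.sub_lt h Nat.one_pos⟩ / c ⟨0, h⟩ else 1

/-- Largest component. -/
def maxc {n : ℕ} (x : Fin n → ℝ) : ℝ := sSup (Set.range x)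

/-- Smallest component. -/
def minc {n : ℕ} (x : Fin n → ℝ) : ℝ := sInf (Set.range x)

/-- `c'` is a (contiguous) segment of `c`. -/
def IsSegment {j k : ℕ} (c' : Fin j → ℝ) (c : Fin k → ℝ) : Prop :=
  ∃ (i : ℕ) (_h : i + j ≤ k), ∀ t : Fin j, c' t = c ⟨i + t, by have := t.isLt; omega⟩

/-- The first `d` components of a vector. -/
def take {n : ℕ} (x : Fin n → ℝ) (d : ℕ) (h : d ≤ n) : Fin d → ℝ :=
  fun i => x ⟨i, Nat.lt_of_lt_of_le i.isLt h⟩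

/-- The components of a vector after the first `d` ones. -/
def drop {n : ℕ} (x : Fin n → ℝ) (d : ℕ) : Fin (n - d) → ℝ :=
  fun i => x ⟨d + i, by have := i.isLt; omega⟩

/-- The segment `(c_i, …, c_j)` of `c` (`0`-based indices). -/
def seg {k : ℕ} (c : Fin k → ℝ) (i j : ℕ) (hij : i ≤ j) (hj : j < k) :
    Fin (j - i + 1) → ℝ :=
  fun t => c ⟨i + t, by have := t.isLt; omega⟩

/-- `(c_i, …, c_j)` is a block of the decomposition `[c]_α` of the (positive,
non-increasingly ordered) vector `c` according to `α`: ratios within the block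
exceed `α`, and the ratios at the two boundaries of the block are `≤ α`
(or the block touches an end of `c`). -/
def IsBlock {k : ℕ} (α : ℝ) (c : Fin k → ℝ) (i j : ℕ) : Prop :=
  ∃ (hij : i ≤ j) (hj : j < k),
    (i = 0 ∨ c ⟨i, by omega⟩ / c ⟨i - 1, by omega⟩ ≤ α) ∧
    (j = k - 1 ∨ ∃ hj1 : j + 1 < k, c ⟨j + 1, hj1⟩ / c ⟨j, hj⟩ ≤ α) ∧
    (∀ (t : ℕ) (ht1 : i ≤ t) (ht2 : t < j), α < c ⟨t + 1, by omega⟩ / c ⟨t, by omega⟩)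

/-- `T_k(y)` : states transformable to `y` with a `k`-dimensional catalyst. -/
def Tk {n : ℕ} (k : ℕ) (y : Fin n → ℝ) : Set (Fin n → ℝ) :=
  {x ∈ Vn n | ∃ c : Fin k → ℝ, (∀ i, 0 < c i) ∧ (∑ i, c i) = 1 ∧ Antitone c ∧
    Maj (tensor x c) (tensor y c)}

/-- `M_k(y)` : states `x` with `x^{⊗k} ≺ y^{⊗k}`. -/
def Mk {n : ℕ} (k : ℕ) (y : Fin n → ℝ) : Set (Fin n → ℝ) :=
  {x ∈ Vn n | Maj (tpow x k) (tpow y k)}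

/-- `T(y)` : states transformable to `y` with some catalyst. -/
def Tinf {n : ℕ} (y : Fin n → ℝ) : Set (Fin n → ℝ) :=
  {x ∈ Vn n | ∃ (k : ℕ) (c : Fin k → ℝ), 0 < k ∧ (∀ i, 0 < c i) ∧ (∑ i, c i) = 1 ∧
    Antitone c ∧ Maj (tensor x c) (tensor y c)}

/-- `M(y)` : states `x` with `x^{⊗k} ≺ y^{⊗k}` for some `k ≥ 1`. -/
def Minf {n : ℕ} (y : Fin n → ℝ) : Set (Fin n → ℝ) :=
  {x ∈ Vn n | ∃ k : ℕ, 1 ≤ k ∧ Maj (tpow x k) (tpow y k)}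

/-- `S^λ(y)` : states `x` with `x ≺ʷ λ y`. -/
def Slam {n : ℕ} (lam : ℝ) (y : Fin n → ℝ) : Set (Fin n → ℝ) :=
  {x ∈ Vn n | SupMaj x (fun i => lam * y i)}

/-- `T^λ(y,c)` : states `x` with `x ⊗ c ≺ʷ λ (y ⊗ c)`. -/
def Tlamc {n k : ℕ} (lam : ℝ) (y : Fin n → ℝ) (c : Fin k → ℝ) : Set (Fin n → ℝ) :=
  {x ∈ Vn n | SupMaj (tensor x c) (fun i => lam * tensor y c i)}

/-- `T_k^λ(y)`. -/
def Tklam {n : ℕ} (k : ℕ) (lam : ℝ) (y : Fin n → ℝ) : Set (Fin n → ℝ) :=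
  {x ∈ Vn n | ∃ c : Fin k → ℝ, (∀ i, 0 < c i) ∧ (∑ i, c i) = 1 ∧ Antitone c ∧
    SupMaj (tensor x c) (fun i => lam * tensor y c i)}

/-- `M_k^λ(y)`. -/
def Mklam {n : ℕ} (k : ℕ) (lam : ℝ) (y : Fin n → ℝ) : Set (Fin n → ℝ) :=
  {x ∈ Vn n | SupMaj (tpow x k) (fun i => lam ^ k * tpow y k i)}

/-- `T^λ(y)`. -/
def Tlaminf {n : ℕ} (lam : ℝ) (y : Fin n → ℝ) : Set (Fin n → ℝ) :=
  {x ∈ Vn n | ∃ (k : ℕ) (c : Fin k → ℝ), 0 < k ∧ (∀ i, 0 < c i) ∧ (∑ i, c i) = 1 ∧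
    Antitone c ∧ SupMaj (tensor x c) (fun i => lam * tensor y c i)}

/-- `M^λ(y)`. -/
def Mlaminf {n : ℕ} (lam : ℝ) (y : Fin n → ℝ) : Set (Fin n → ℝ) :=
  {x ∈ Vn n | ∃ k : ℕ, 1 ≤ k ∧ SupMaj (tpow x k) (fun i => lam ^ k * tpow y k i)}

/-- `K_d(y)` : concatenations `x = x' ⊕ x''` with `x' ◁ y'` and `x'' ◁ y''`,
where `y'` is the first-`d` part of `y` and `y''` the rest. -/
def Kd {n : ℕ} (y : Fin n → ℝ) (d : ℕ) (h : d ≤ n) : Set (Fin n → ℝ) :=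
  {x ∈ Vn n | SMaj (take x d h) (take y d h) ∧ SMaj (drop x d) (drop y d)}

/-- `y(d)` : first `d` components equal to `e_d(y)/d`, the last `n-d` equal to
`(1 - e_d(y))/(n-d)`. -/
def yvec {n : ℕ} (y : Fin n → ℝ) (d : ℕ) : Fin n → ℝ :=
  fun i => if (i : ℕ) < d then eSum y d / d else (1 - eSum y d) / (n - d)

/-- `K_d^λ(y)` : states `x ∈ S^λ(y)` with `E_l(x) = λ E_l(y)` iff `l = n - d`. -/
def Kdlam {n : ℕ} (lam : ℝ) (y : Fin n → ℝ) (d : ℕ) : Set (Fin n → ℝ) :=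
  {x ∈ Vn n | SupMaj x (fun i => lam * y i) ∧
    ∀ l : ℕ, 1 ≤ l → l ≤ n → (ESum x l = lam * ESum y l ↔ l = n - d)}

/-!
Majorization `x ≺ y` amounts to `∑ (xᵢ - τ)⁺ ≤ ∑ (yᵢ - τ)⁺` for all `τ`, with equality in
`∑_{i ∈ s} (xᵢ - τ) ≤ ∑ (xᵢ - τ)⁺` exactly when `τ` separates the values on `s` from the others.

Suppose condition (3) holds at the cut between `d` and `d + 1`, and let
`r = max (y_d / y_1) (y_n / y_{d+1})`, so that `y_{d+1} ≤ r ^ (k - 1) * y_d`. Given catalyst weights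
`w`, descend from the largest weight as long as the next ratio exceeds `r`; this block `S` spans a
factor of at least `r ^ (k - 1)`. If `r = y_d / y_1`, then `{1, …, d} × S` carries the largest
components of `y ⊗ w`, and factoring the sums over it yields `e_d(x) ≤ e_d(y)`. If
`r = y_n / y_{d+1}`, the same works with the smallest components. For tensor powers the set of words
with all letters on one side of the cut plays this role.

If condition (3) fails at the cut, choose `α < 1` slightly larger than `r` and let `u` be obtained
from `y` by averaging on both sides of the cut. With the weights `α ^ j`, the sets of index pairs on
which `u ⊗ w` is constant have overlapping ranges of values of `y ⊗ w`. No `τ` strictly between the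
extreme components then separates a union of such sets, so every inequality in `u ⊗ w ≺ y ⊗ w` is
strict, and it survives moving a little mass across the cut, which takes `u` out of `S(y)`. For
tensor powers the overlap comes from the words with `p` letters below the cut and `k - p` above it.
-/

open Finset Filter Topology

section Majorization

variable {ι κ : Type*} [Fintype ι] [Fintype κ]

/-- Majorization `x ≺ y` of real families on an arbitrary finite index type, encoded by the
hinge functions `z ↦ (z - τ)⁺` instead of sums of largest components. -/
def MajOn (x y : ι → ℝ) : Prop :=
  ∑ i, x i = ∑ i, y i ∧ ∀ τ : ℝ, ∑ i, (x i - τ)⁺ ≤ ∑ i, (y i - τ)⁺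

/-- The value `τ` separates the set `s` from its complement: `s` carries `#s` largest values
of `v`. Values equal to `τ` may occur on both sides. -/
def Separates {ι : Type*} (v : ι → ℝ) (τ : ℝ) (s : Finset ι) : Prop :=
  (∀ i ∈ s, τ ≤ v i) ∧ ∀ i ∉ s, v i ≤ τ

lemma MajOn.refl (x : ι → ℝ) : MajOn x x :=
  ⟨rfl, fun _ => le_rfl⟩

lemma MajOn.trans {x y z : ι → ℝ} (hxy : MajOn x y) (hyz : MajOn y z) : MajOn x z :=
  ⟨hxy.1.trans hyz.1, fun τ => (hxy.2 τ).trans (hyz.2 τ)⟩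

lemma sum_sub_le_sum_posPart (v : ι → ℝ) (τ : ℝ) (s : Finset ι) :
    ∑ i ∈ s, (v i - τ) ≤ ∑ i, (v i - τ)⁺ :=
  (sum_le_sum fun _ _ => le_posPart _).trans
    (sum_le_univ_sum_of_nonneg fun _ => posPart_nonneg _)

lemma sum_sub_eq_sum_posPart_iff {v : ι → ℝ} {τ : ℝ} {s : Finset ι} :
    ∑ i ∈ s, (v i - τ) = ∑ i, (v i - τ)⁺ ↔ Separates v τ s := by
  classical
  rw [← sum_ite_mem_eq s fun i => v i - τ, sum_eq_sum_iff_of_le]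
  · refine ⟨fun h => ⟨fun i hi => ?_, fun i hi => ?_⟩, fun h i _ => ?_⟩
    · exact sub_nonneg.1 (posPart_eq_self.1 (by simpa [hi] using (h i (mem_univ i)).symm))
    · exact sub_nonpos.1 (posPart_eq_zero.1 (by simpa [hi] using (h i (mem_univ i)).symm))
    · split_ifs with hi
      exacts [(posPart_eq_self.2 (sub_nonneg.2 (h.1 i hi))).symm,
        (posPart_eq_zero.2 (sub_nonpos.2 (h.2 i hi))).symm]
  · intro i _
    split_ifs
    exacts [le_posPart _, posPart_nonneg _]

lemma exists_separates_card_eq (v : ι → ℝ) {m : ℕ} (hm : m ≤ Fintype.card ι) :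
    ∃ s τ, #s = m ∧ Separates v τ s := by
  classical
  induction m with
  | zero =>
    obtain ⟨τ, hτ⟩ := (Set.finite_range v).bddAbove
    exact ⟨∅, τ, rfl, by simp, fun i _ => hτ ⟨i, rfl⟩⟩
  | succ m ih =>
    obtain ⟨s, τ, hs, hτ, hτ'⟩ := ih (by lia)
    obtain ⟨a, ha, hmax⟩ := exists_max_image sᶜ v (by rw [← card_pos, card_compl]; lia)
    rw [mem_compl] at ha
    refine ⟨insert a s, v a, by rw [card_insert_of_notMem ha, hs], fun i hi => ?_, fun i hi => ?_⟩
    · rcases mem_insert.1 hi with rfl | hi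
      exacts [le_rfl, (hτ' a ha).trans (hτ i hi)]
    · exact hmax i (mem_compl.2 fun his => hi (mem_insert_of_mem his))

lemma MajOn.sum_le {x y : ι → ℝ} (h : MajOn x y) {s t : Finset ι} {τ : ℝ}
    (ht : Separates y τ t) (hst : #s = #t) : ∑ i ∈ s, x i ≤ ∑ i ∈ t, y i := by
  have hinge : ∑ i ∈ s, (x i - τ) ≤ ∑ i ∈ t, (y i - τ) :=
    calc ∑ i ∈ s, (x i - τ) ≤ ∑ i, (x i - τ)⁺ := sum_sub_le_sum_posPart x τ s
      _ ≤ ∑ i, (y i - τ)⁺ := h.2 τ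
      _ = ∑ i ∈ t, (y i - τ) := (sum_sub_eq_sum_posPart_iff.2 ht).symm
  simpa [sum_sub_distrib, hst] using hinge

lemma MajOn.le_sum_of_separates_compl [DecidableEq ι] {x y : ι → ℝ} (h : MajOn x y)
    {s : Finset ι} {τ : ℝ} (hs : Separates y τ sᶜ) : ∑ i ∈ s, y i ≤ ∑ i ∈ s, x i := by
  have hx := sum_add_sum_compl s x
  have hy := sum_add_sum_compl s y
  linarith [h.1, h.sum_le hs rfl]

lemma majOn_of_forall_exists {x y : ι → ℝ} (hsum : ∑ i, x i = ∑ i, y i)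
    (h : ∀ s : Finset ι, ∃ t : Finset ι, #t = #s ∧ ∑ i ∈ s, x i ≤ ∑ i ∈ t, y i) :
    MajOn x y := by
  classical
  refine ⟨hsum, fun τ => ?_⟩
  have hsep : Separates x τ {i | τ ≤ x i} := ⟨by simp, by simpa using fun i hi => le_of_lt hi⟩
  obtain ⟨t, hcard, hle⟩ := h {i | τ ≤ x i}
  rw [← sum_sub_eq_sum_posPart_iff.2 hsep]
  refine le_trans ?_ (sum_sub_le_sum_posPart y τ t)
  simpa [sum_sub_distrib, hcard] using hle

lemma majOn_comp_equiv {x y : ι → ℝ} (e : κ ≃ ι) : MajOn (x ∘ e) (y ∘ e) ↔ MajOn x y := by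
  have hinge (z : ι → ℝ) (τ : ℝ) : ∑ j, (z (e j) - τ)⁺ = ∑ i, (z i - τ)⁺ :=
    e.sum_comp fun i => (z i - τ)⁺
  simp only [MajOn, Function.comp_apply, hinge, e.sum_comp]

lemma MajOn.mul_right {x y : ι → ℝ} (h : MajOn x y) {w : κ → ℝ} (hw : ∀ j, 0 ≤ w j) :
    MajOn (fun p : ι × κ => x p.1 * w p.2) (fun p => y p.1 * w p.2) := by
  refine ⟨by simp only [Fintype.sum_prod_type_right, ← sum_mul, h.1], fun τ => ?_⟩
  simp only [Fintype.sum_prod_type_right]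
  refine sum_le_sum fun j _ => ?_
  rcases (hw j).eq_or_lt with hj | hj
  · simp [← hj]
  · have rescale (a : ℝ) : (a * w j - τ)⁺ = (a - τ / w j)⁺ * w j := by
      rw [posPart_def, posPart_def, max_mul_of_nonneg _ _ hj.le, zero_mul, sub_mul,
        div_mul_cancel₀ _ hj.ne']
    simp only [rescale, ← sum_mul]
    exact mul_le_mul_of_nonneg_right (h.2 _) hj.le

lemma MajOn.pow {x y : ι → ℝ} (h : MajOn x y) (hx : ∀ i, 0 ≤ x i) (hy : ∀ i, 0 ≤ y i) (k : ℕ) :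
    MajOn (fun f : Fin k → ι => ∏ j, x (f j)) (fun f => ∏ j, y (f j)) := by
  induction k with
  | zero => simpa using MajOn.refl _
  | succ k ih =>
    have first : MajOn (fun p : ι × (Fin k → ι) => x p.1 * ∏ j, x (p.2 j))
        (fun p => y p.1 * ∏ j, x (p.2 j)) :=
      h.mul_right (w := fun f : Fin k → ι => ∏ j, x (f j)) fun f => prod_nonneg fun j _ => hx _
    have rest : MajOn (fun p : ι × (Fin k → ι) => y p.1 * ∏ j, x (p.2 j))
        (fun p => y p.1 * ∏ j, y (p.2 j)) := by
      simpa only [Function.comp_def, Equiv.prodComm_apply, Prod.fst_swap, Prod.snd_swap, mul_comm]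
        using (majOn_comp_equiv (Equiv.prodComm ι (Fin k → ι))).2 (ih.mul_right hy)
    simpa [Function.comp_def, Fin.prod_univ_succ, Fin.consEquiv, Fin.tail] using
      (majOn_comp_equiv (Fin.consEquiv fun _ : Fin (k + 1) => ι).symm).2 (first.trans rest)

end Majorization

section Vectors

variable {n k : ℕ}

lemma Separates.eSum_card {x : Fin n → ℝ} {τ : ℝ} {s : Finset (Fin n)} (hs : Separates x τ s) :
    eSum x #s = ∑ i ∈ s, x i :=
  IsGreatest.csSup_eq ⟨⟨s, rfl, rfl⟩, by
    rintro _ ⟨t, hts, rfl⟩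
    exact (MajOn.refl x).sum_le hs hts⟩

lemma maj_iff_majOn {x y : Fin n → ℝ} : Maj x y ↔ MajOn x y := by
  refine ⟨fun h => majOn_of_forall_exists h.1 fun s => ?_, fun h => ⟨h.1, fun l _ hl => ?_⟩⟩
  · have hcard : #s ≤ n := by simpa using s.card_le_univ
    obtain ⟨s', σ, hs', hσ⟩ := exists_separates_card_eq x s.card_le_univ
    obtain ⟨t, τ, ht, hτ⟩ := exists_separates_card_eq y s.card_le_univ
    refine ⟨t, ht, ((MajOn.refl x).sum_le hσ hs'.symm).trans ?_⟩
    rcases (#s).eq_zero_or_pos with h0 | hpos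
    · rw [card_eq_zero.1 (hs'.trans h0), card_eq_zero.1 (ht.trans h0), sum_empty, sum_empty]
    · rw [← hσ.eSum_card, ← hτ.eSum_card, hs', ht]
      exact h.2 _ hpos hcard
  · have hl' : l ≤ Fintype.card (Fin n) := by simpa using hl
    obtain ⟨s, σ, rfl, hσ⟩ := exists_separates_card_eq x hl'
    obtain ⟨t, τ, ht, hτ⟩ := exists_separates_card_eq y hl'
    rw [hσ.eSum_card, ← ht, hτ.eSum_card]
    exact h.sum_le hτ ht.symm

lemma maj_tensor_iff {x y : Fin n → ℝ} {c : Fin k → ℝ} :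
    Maj (tensor x c) (tensor y c) ↔
      MajOn (fun p : Fin n × Fin k => x p.1 * c p.2) (fun p => y p.1 * c p.2) :=
  maj_iff_majOn.trans <| majOn_comp_equiv (x := fun p : Fin n × Fin k => x p.1 * c p.2)
    (y := fun p => y p.1 * c p.2) finProdFinEquiv.symm

lemma maj_tpow_iff {x y : Fin n → ℝ} :
    Maj (tpow x k) (tpow y k) ↔
      MajOn (fun f : Fin k → Fin n => ∏ j, x (f j)) (fun f => ∏ j, y (f j)) :=
  maj_iff_majOn.trans <| majOn_comp_equiv (x := fun f : Fin k → Fin n => ∏ j, x (f j))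
    (y := fun f => ∏ j, y (f j)) finFunctionFinEquiv.symm

lemma sset_subset_tk (hk : 0 < k) (y : Fin n → ℝ) : Sset y ⊆ Tk k y := by
  rintro x ⟨hx, hxy⟩
  have hk' : (0 : ℝ) < k := by exact_mod_cast hk
  exact ⟨hx, fun _ => 1 / k, fun _ => by positivity, by simp [hk'.ne'], antitone_const,
    maj_tensor_iff.2 <| (maj_iff_majOn.1 hxy).mul_right (w := fun _ => 1 / (k : ℝ))
      fun _ => by positivity⟩

lemma sset_subset_mk {y : Fin n → ℝ} (hy : ∀ i, 0 ≤ y i) : Sset y ⊆ Mk k y :=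
  fun _ hx => ⟨hx.1, maj_tpow_iff.2 <| (maj_iff_majOn.1 hx.2).pow hx.1.1 hy k⟩

lemma separates_Iio_of_antitone {v : Fin n → ℝ} (hv : Antitone v) (d : Fin n) :
    Separates v (v d) (Iio d) :=
  ⟨fun _ hi => hv (mem_Iio.1 hi).le, fun _ hi => hv (not_lt.1 (mem_Iio.not.1 hi))⟩

lemma eSum_top (x : Fin n → ℝ) : eSum x n = ∑ i, x i := by
  obtain ⟨s, τ, hs, hτ⟩ := exists_separates_card_eq x le_rfl
  rw [← (card_eq_iff_eq_univ s).1 hs, ← hτ.eSum_card, hs, Fintype.card_fin]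

lemma maj_iff_of_antitone {x y : Fin n → ℝ} (hx : Antitone x) (hy : Antitone y) :
    Maj x y ↔ ∑ i, x i = ∑ i, y i ∧ ∀ d, ∑ i ∈ Iio d, x i ≤ ∑ i ∈ Iio d, y i := by
  refine ⟨fun h => ⟨h.1, fun d => ?_⟩, fun h => ⟨h.1, fun l _ hl => ?_⟩⟩
  · exact (maj_iff_majOn.1 h).sum_le (separates_Iio_of_antitone hy d) rfl
  · rcases hl.lt_or_eq with hl | rfl
    · obtain ⟨d, rfl⟩ : ∃ d : Fin n, (d : ℕ) = l := ⟨⟨l, hl⟩, rfl⟩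
      rw [← Fin.card_Iio d, (separates_Iio_of_antitone hx _).eSum_card,
        (separates_Iio_of_antitone hy _).eSum_card]
      exact h.2 _
    · rw [eSum_top, eSum_top, h.1]

end Vectors

section Cuts

variable {ι κ : Type*} {k : ℕ}

/-- A cut of the values of `y` into a set `H` of largest ones and the rest. The elements `a` and `b`
attain the largest and the smallest value on `H`, and `c` and `e` those off `H`; for the vectors of
the paper they are the indices `1`, `d`, `d + 1` and `n`. -/
structure IsCut (y : ι → ℝ) (H : Finset ι) (a b c e : ι) : Prop where
  a_mem : a ∈ H
  b_mem : b ∈ H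
  c_notMem : c ∉ H
  e_notMem : e ∉ H
  le_a : ∀ i ∈ H, y i ≤ y a
  b_le : ∀ i ∈ H, y b ≤ y i
  le_c : ∀ i ∉ H, y i ≤ y c
  e_le : ∀ i ∉ H, y e ≤ y i
  c_le_b : y c ≤ y b

lemma IsCut.apply_le_a {y : ι → ℝ} {H : Finset ι} {a b c e : ι} (h : IsCut y H a b c e) (i : ι) :
    y i ≤ y a := by
  by_cases hi : i ∈ H
  · exact h.le_a i hi
  · exact (h.le_c i hi).trans (h.c_le_b.trans (h.le_a b h.b_mem))

lemma IsCut.e_le_apply {y : ι → ℝ} {H : Finset ι} {a b c e : ι} (h : IsCut y H a b c e) (i : ι) :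
    y e ≤ y i := by
  by_cases hi : i ∈ H
  · exact (h.e_le c h.c_notMem).trans (h.c_le_b.trans (h.b_le i hi))
  · exact h.e_le i hi

/-- Condition (3) of the paper at one cut, in terms of the values `A = y₁`, `B = y_d`,
`C = y_{d+1}` and `D = y_n`. -/
def RigidCut (k : ℕ) (A B C D : ℝ) : Prop :=
  B ^ k ≥ A ^ (k - 1) * C ∨ C ^ k ≤ D ^ (k - 1) * B

lemma isCut_Iio {n d : ℕ} {y : Fin n → ℝ} (hy : Antitone y) (hd0 : 0 < d) (hd : d < n) :
    IsCut y (Iio ⟨d, hd⟩) ⟨0, by lia⟩ ⟨d - 1, by lia⟩ ⟨d, hd⟩ ⟨n - 1, by lia⟩ := by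
  constructor
  case c_le_b => exact hy (Fin.le_def.2 (Nat.sub_le d 1))
  all_goals simp only [mem_Iio, Fin.lt_def, not_lt]
  case a_mem | b_mem | c_notMem | e_notMem => lia
  all_goals exact fun i _ => hy (Fin.le_def.2 (by simp only; lia))

lemma rigidCut_of_eq_left {B C D : ℝ} (hk : 0 < k) (hB : 0 ≤ B) (hCB : C ≤ B) :
    RigidCut k B B C D := by
  refine Or.inl ?_
  rw [← Nat.sub_add_cancel hk, pow_succ, Nat.add_sub_cancel]
  exact mul_le_mul_of_nonneg_left hCB (pow_nonneg hB _)

lemma rigidCut_of_eq_right {A B C : ℝ} (hk : 0 < k) (hC : 0 ≤ C) (hCB : C ≤ B) :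
    RigidCut k A B C C := by
  refine Or.inr ?_
  rw [← Nat.sub_add_cancel hk, pow_succ, Nat.add_sub_cancel]
  exact mul_le_mul_of_nonneg_left hCB (pow_nonneg hC _)

section Ratio

variable {A B C D : ℝ}

lemma rigidCut_iff (hk : 0 < k) (hD : 0 ≤ D) (hDC : D ≤ C) (hCB : C ≤ B) (hBA : B ≤ A) :
    RigidCut k A B C D ↔ C ≤ max (B / A) (D / C) ^ (k - 1) * B := by
  obtain ⟨m, rfl⟩ := Nat.exists_eq_add_of_lt hk
  simp only [RigidCut, zero_add, Nat.add_sub_cancel, ge_iff_le, pow_succ]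
  rcases (hD.trans hDC).eq_or_lt with rfl | hC
  · exact iff_of_true (Or.inr (by simpa using by positivity)) (by positivity)
  · have hB : 0 < B := hC.trans_le hCB
    have hA : 0 < A := hB.trans_le hBA
    have hmax : max (B / A) (D / C) ^ m * B = max ((B / A) ^ m * B) ((D / C) ^ m * B) := by
      rcases le_total (B / A) (D / C) with h | h
      · rw [max_eq_right h, max_eq_right (by gcongr)]
      · rw [max_eq_left h, max_eq_left (by gcongr)]
    rw [hmax, le_max_iff, div_pow, div_pow, div_mul_eq_mul_div, div_mul_eq_mul_div,
      le_div_iff₀ (by positivity), le_div_iff₀ (by positivity), mul_comm C, mul_comm C]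

lemma RigidCut.exists_ratio (h : RigidCut k A B C D) (hk : 0 < k) (hD : 0 ≤ D) (hDC : D ≤ C)
    (hCB : C ≤ B) (hBA : B ≤ A) :
    ∃ r, 0 ≤ r ∧ r ≤ 1 ∧ C ≤ r ^ (k - 1) * B ∧ (r * A ≤ B ∨ r * C ≤ D) := by
  have hC : 0 ≤ C := hD.trans hDC
  have hB : 0 ≤ B := hC.trans hCB
  have hA : 0 ≤ A := hB.trans hBA
  refine ⟨max (B / A) (D / C), by positivity,
    max_le (div_le_one_of_le₀ hBA hA) (div_le_one_of_le₀ hDC hC),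
    (rigidCut_iff hk hD hDC hCB hBA).1 h, ?_⟩
  rcases max_choice (B / A) (D / C) with hr | hr <;> rw [hr]
  · exact Or.inl (div_mul_cancel_of_imp fun hA0 => by linarith).le
  · exact Or.inr (div_mul_cancel_of_imp fun hC0 => by linarith).le

/-- A ratio `α` for which consecutive geometric intervals `(B α ^ p, A α ^ p)` overlap, consecutive
intervals `(D α ^ p, C α ^ p)` overlap, and the second chain starts above the end of the first at
`p = k - 1`. Such a ratio witnesses that a cut is not rigid. -/
structure IsOverlapRatio (k : ℕ) (α A B C D : ℝ) : Prop where
  pos : 0 < α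
  lt_one : α < 1
  lt_upper : B < α * A
  lt_lower : D < α * C
  joins : α ^ (k - 1) * B < C

lemma exists_isOverlapRatio (h : ¬ RigidCut k A B C D) (hk : 0 < k) (hD : 0 ≤ D)
    (hDC : D ≤ C) (hCB : C ≤ B) (hBA : B ≤ A) : ∃ α, IsOverlapRatio k α A B C D := by
  set r := max (B / A) (D / C)
  have hB : 0 ≤ B := (hD.trans hDC).trans hCB
  have hrC : r ^ (k - 1) * B < C := not_le.1 ((rigidCut_iff hk hD hDC hCB hBA).not.1 h)
  have hr0 : 0 ≤ r := le_max_of_le_left (div_nonneg hB (hB.trans hBA))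
  have hC : 0 < C := lt_of_le_of_lt (by positivity) hrC
  have hA : 0 < A := by linarith
  have hr1 : r < 1 := by
    by_contra! hr1
    exact (hrC.trans_le hCB).not_ge (le_mul_of_one_le_left hB (one_le_pow₀ hr1))
  have hcont : Continuous fun t : ℝ => t ^ (k - 1) * B := by fun_prop
  have hnear : ∀ᶠ t in 𝓝[>] r, t ^ (k - 1) * B < C :=
    (hcont.continuousAt.eventually_lt continuousAt_const hrC).filter_mono nhdsWithin_le_nhds
  obtain ⟨α, hα, hrα, hα1⟩ := (hnear.and (Ioo_mem_nhdsGT hr1)).exists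
  exact ⟨α, hr0.trans_lt hrα, hα1, (div_lt_iff₀ hA).1 ((le_max_left _ _).trans_lt hrα),
    (div_lt_iff₀ hC).1 ((le_max_right _ _).trans_lt hrα), hα⟩

end Ratio

lemma exists_top_block {w : κ → ℝ} (hw : ∀ j, 0 < w j) {r : ℝ} (hr0 : 0 ≤ r) (hr1 : r ≤ 1)
    {s : Finset κ} (hs : s.Nonempty) :
    ∃ S ⊆ s, ∃ j₀ ∈ S, (∀ j ∈ S, w j₀ ≤ w j) ∧ (∀ j ∈ s, r ^ (#s - 1) * w j ≤ w j₀) ∧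
      ∀ j ∈ s, j ∉ S → w j ≤ r * w j₀ := by
  classical
  induction s using Finset.induction_on_max_value w with
  | empty => simp at hs
  | insert a s has hmax ih =>
    have hpow : r ^ #s ≤ 1 := pow_le_one₀ hr0 hr1
    rw [card_insert_of_notMem has, Nat.add_sub_cancel]
    by_cases hgap : ∀ j ∈ s, w j ≤ r * w a
    · refine ⟨{a}, by simp, a, by simp, by simp, fun j hj => ?_, fun j hj hja => ?_⟩
      · have hja : w j ≤ w a := by
          rcases mem_insert.1 hj with rfl | hj
          exacts [le_rfl, hmax j hj]
        exact (mul_le_of_le_one_left (hw j).le hpow).trans hja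
      · exact hgap j (mem_of_mem_insert_of_ne hj (by simpa using hja))
    · push Not at hgap
      obtain ⟨j₁, hj₁, hgap⟩ := hgap
      obtain ⟨S, hSs, j₀, hj₀, hlow, hspread, hout⟩ := ih ⟨j₁, hj₁⟩
      have hcard : r ^ #s = r ^ (#s - 1) * r := by
        rw [← pow_succ, Nat.sub_add_cancel (card_pos.2 ⟨j₁, hj₁⟩)]
      refine ⟨insert a S, insert_subset_insert a hSs, j₀, mem_insert_of_mem hj₀,
        fun j hj => ?_, fun j hj => ?_, fun j hj hjS => ?_⟩
      · rcases mem_insert.1 hj with rfl | hj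
        exacts [hmax j₀ (hSs hj₀), hlow j hj]
      · have hspread' : r ^ (#s - 1) * (r * w j) ≤ w j₀ := by
          rcases mem_insert.1 hj with rfl | hj
          · exact (mul_le_mul_of_nonneg_left hgap.le (pow_nonneg hr0 _)).trans (hspread j₁ hj₁)
          · refine (mul_le_mul_of_nonneg_left ?_ (pow_nonneg hr0 _)).trans (hspread j hj)
            exact mul_le_of_le_one_left (hw j).le hr1
        rwa [hcard, mul_assoc]
      · rw [mem_insert, not_or] at hjS
        exact hout j (mem_of_mem_insert_of_ne hj hjS.1) hjS.2

lemma exists_bottom_block {w : κ → ℝ} (hw : ∀ j, 0 < w j) {r : ℝ} (hr0 : 0 ≤ r) (hr1 : r ≤ 1)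
    {s : Finset κ} (hs : s.Nonempty) :
    ∃ S ⊆ s, ∃ j₀ ∈ S, (∀ j ∈ S, w j ≤ w j₀) ∧ (∀ j ∈ s, r ^ (#s - 1) * w j₀ ≤ w j) ∧
      ∀ j ∈ s, j ∉ S → w j₀ ≤ r * w j := by
  obtain ⟨S, hSs, j₀, hj₀, hlow, hspread, hout⟩ :=
    exists_top_block (w := fun j => (w j)⁻¹) (fun j => inv_pos.2 (hw j)) hr0 hr1 hs
  refine ⟨S, hSs, j₀, hj₀, fun j hj => ?_, fun j hj => ?_, fun j hj hjS => ?_⟩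
  · exact (inv_le_inv₀ (hw j₀) (hw j)).1 (hlow j hj)
  · have := hspread j hj
    rwa [← div_eq_mul_inv, ← one_div, div_le_div_iff₀ (hw j) (hw j₀), one_mul] at this
  · have := hout j hj hjS
    rwa [← div_eq_mul_inv, ← one_div, div_le_div_iff₀ (hw j) (hw j₀), one_mul] at this

end Cuts

section Sufficiency

variable {ι κ : Type*} [Fintype κ] {x y : ι → ℝ} {H : Finset ι} {a b c e : ι}

section Product

variable [Nonempty κ] {w : κ → ℝ} {r : ℝ}

lemma IsCut.exists_separates_product (hcut : IsCut y H a b c e) (hy : ∀ i, 0 ≤ y i)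
    (hw : ∀ j, 0 < w j) (hr0 : 0 ≤ r) (hr1 : r ≤ 1)
    (hcb : y c ≤ r ^ (Fintype.card κ - 1) * y b) (hab : r * y a ≤ y b) :
    ∃ (S : Finset κ) (τ : ℝ), S.Nonempty ∧
      Separates (fun p : ι × κ => y p.1 * w p.2) τ (H ×ˢ S) := by
  obtain ⟨S, -, j₀, hj₀, hlow, hspread, hout⟩ := exists_top_block hw hr0 hr1 univ_nonempty
  refine ⟨S, y b * w j₀, ⟨j₀, hj₀⟩, fun p hp => ?_, fun p hp => ?_⟩
  · rw [mem_product] at hp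
    exact mul_le_mul (hcut.b_le _ hp.1) (hlow _ hp.2) (hw _).le (hy _)
  · by_cases hpH : p.1 ∈ H
    · have hpS : p.2 ∉ S := fun hpS => hp (mk_mem_product hpH hpS)
      calc y p.1 * w p.2 ≤ y a * (r * w j₀) :=
            mul_le_mul (hcut.le_a _ hpH) (hout _ (mem_univ _) hpS) (hw _).le (hy _)
        _ = r * y a * w j₀ := by ring
        _ ≤ y b * w j₀ := mul_le_mul_of_nonneg_right hab (hw _).le
    · calc y p.1 * w p.2 ≤ r ^ (Fintype.card κ - 1) * y b * w p.2 :=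
            mul_le_mul_of_nonneg_right ((hcut.le_c _ hpH).trans hcb) (hw _).le
        _ = y b * (r ^ (Fintype.card κ - 1) * w p.2) := by ring
        _ ≤ y b * w j₀ := mul_le_mul_of_nonneg_left (hspread _ (mem_univ _)) (hy _)

lemma IsCut.exists_separates_compl_product [Fintype ι] [DecidableEq ι] [DecidableEq κ]
    (hcut : IsCut y H a b c e) (hy : ∀ i, 0 ≤ y i) (hw : ∀ j, 0 < w j) (hr0 : 0 ≤ r) (hr1 : r ≤ 1)
    (hcb : y c ≤ r ^ (Fintype.card κ - 1) * y b) (hce : r * y c ≤ y e) :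
    ∃ (S : Finset κ) (τ : ℝ), S.Nonempty ∧
      Separates (fun p : ι × κ => y p.1 * w p.2) τ (Hᶜ ×ˢ S)ᶜ := by
  obtain ⟨S, -, j₀, hj₀, hhigh, hspread, hout⟩ := exists_bottom_block hw hr0 hr1 univ_nonempty
  refine ⟨S, y c * w j₀, ⟨j₀, hj₀⟩, fun p hp => ?_, fun p hp => ?_⟩
  · by_cases hpH : p.1 ∈ H
    · calc y c * w j₀ ≤ r ^ (Fintype.card κ - 1) * y b * w j₀ :=
            mul_le_mul_of_nonneg_right hcb (hw _).le
        _ = y b * (r ^ (Fintype.card κ - 1) * w j₀) := by ring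
        _ ≤ y p.1 * w p.2 := mul_le_mul (hcut.b_le _ hpH) (hspread _ (mem_univ _))
            (mul_nonneg (pow_nonneg hr0 _) (hw _).le) (hy _)
    · have hpS : p.2 ∉ S := by simpa [hpH] using hp
      calc y c * w j₀ ≤ y c * (r * w p.2) :=
            mul_le_mul_of_nonneg_left (hout _ (mem_univ _) hpS) (hy _)
        _ = r * y c * w p.2 := by ring
        _ ≤ y p.1 * w p.2 :=
            mul_le_mul_of_nonneg_right (hce.trans (hcut.e_le _ hpH)) (hw _).le
  · rw [notMem_compl, mem_product, mem_compl] at hp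
    exact mul_le_mul (hcut.le_c _ hp.1) (hhigh _ hp.2) (hw _).le (hy _)

lemma IsCut.sum_le_of_majOn_mul [Fintype ι] (hcut : IsCut y H a b c e) (hy : ∀ i, 0 ≤ y i)
    (hrig : RigidCut (Fintype.card κ) (y a) (y b) (y c) (y e)) (hw : ∀ j, 0 < w j)
    (hmaj : MajOn (fun p : ι × κ => x p.1 * w p.2) (fun p => y p.1 * w p.2))
    (hsum : ∑ i, x i = ∑ i, y i) : ∑ i ∈ H, x i ≤ ∑ i ∈ H, y i := by
  classical
  obtain ⟨r, hr0, hr1, hcb, hab | hce⟩ := hrig.exists_ratio Fintype.card_pos (hy e)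
    (hcut.e_le c hcut.c_notMem) hcut.c_le_b (hcut.le_a b hcut.b_mem)
  · obtain ⟨S, τ, hS, hsep⟩ := hcut.exists_separates_product hy hw hr0 hr1 hcb hab
    have hle := hmaj.sum_le hsep rfl
    simp only [sum_product, ← sum_mul_sum] at hle
    exact le_of_mul_le_mul_right hle (sum_pos (fun j _ => hw j) hS)
  · obtain ⟨S, τ, hS, hsep⟩ := hcut.exists_separates_compl_product hy hw hr0 hr1 hcb hce
    have hle := hmaj.le_sum_of_separates_compl hsep
    simp only [sum_product, ← sum_mul_sum] at hle
    have hcompl := le_of_mul_le_mul_right hle (sum_pos (fun j _ => hw j) hS)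
    linarith [sum_add_sum_compl H x, sum_add_sum_compl H y]

end Product

section Power

lemma prod_le_pow_mul_of_exists_le {z : κ → ℝ} {A C : ℝ} (hz : ∀ j, 0 ≤ z j)
    (hA : ∀ j, z j ≤ A) (hC : ∃ j, z j ≤ C) : ∏ j, z j ≤ A ^ (Fintype.card κ - 1) * C := by
  classical
  obtain ⟨j, hj⟩ := hC
  rw [← prod_erase_mul univ z (mem_univ j), ← card_univ, ← card_erase_of_mem (mem_univ j),
    ← prod_const]
  exact mul_le_mul (prod_le_prod (fun i _ => hz i) fun i _ => hA i) hj (hz j)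
    (prod_nonneg fun i _ => (hz i).trans (hA i))

lemma pow_mul_le_prod_of_exists_ge {z : κ → ℝ} {A C : ℝ} (hA0 : 0 ≤ A) (hC0 : 0 ≤ C)
    (hA : ∀ j, A ≤ z j) (hC : ∃ j, C ≤ z j) : A ^ (Fintype.card κ - 1) * C ≤ ∏ j, z j := by
  classical
  obtain ⟨j, hj⟩ := hC
  rw [← prod_erase_mul univ z (mem_univ j), ← card_univ, ← card_erase_of_mem (mem_univ j),
    ← prod_const]
  exact mul_le_mul (prod_le_prod (fun _ _ => hA0) fun i _ => hA i) hj hC0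
    (prod_nonneg fun i _ => hA0.trans (hA i))

variable [DecidableEq κ]

lemma IsCut.separates_piFinset (hcut : IsCut y H a b c e) (hy : ∀ i, 0 ≤ y i)
    (h : y a ^ (Fintype.card κ - 1) * y c ≤ y b ^ Fintype.card κ) :
    Separates (fun f : κ → ι => ∏ j, y (f j)) (y b ^ Fintype.card κ)
      (Fintype.piFinset fun _ => H) := by
  refine ⟨fun f hf => ?_, fun f hf => ?_⟩
  · rw [Fintype.mem_piFinset] at hf
    rw [← card_univ, ← prod_const]
    exact prod_le_prod (fun _ _ => hy b) fun j _ => hcut.b_le _ (hf j)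
  · have hout : ∃ j, f j ∉ H := by simpa [Fintype.mem_piFinset] using hf
    exact (prod_le_pow_mul_of_exists_le (fun _ => hy _) (fun j => hcut.apply_le_a (f j))
      (hout.imp fun _ => hcut.le_c _)).trans h

lemma IsCut.separates_compl_piFinset [Fintype ι] [DecidableEq ι] (hcut : IsCut y H a b c e)
    (hy : ∀ i, 0 ≤ y i) (h : y c ^ Fintype.card κ ≤ y e ^ (Fintype.card κ - 1) * y b) :
    Separates (fun f : κ → ι => ∏ j, y (f j)) (y c ^ Fintype.card κ)
      (Fintype.piFinset fun _ => Hᶜ)ᶜ := by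
  refine ⟨fun f hf => ?_, fun f hf => ?_⟩
  · have hin : ∃ j, f j ∈ H := by simpa [Fintype.mem_piFinset] using hf
    exact h.trans (pow_mul_le_prod_of_exists_ge (hy e) (hy b) (fun j => hcut.e_le_apply (f j))
      (hin.imp fun _ => hcut.b_le _))
  · rw [notMem_compl, Fintype.mem_piFinset] at hf
    rw [← card_univ, ← prod_const]
    exact prod_le_prod (fun _ _ => hy _) fun j _ => hcut.le_c _ (mem_compl.1 (hf j))

lemma IsCut.sum_le_of_majOn_pow [Fintype ι] [Nonempty κ] (hcut : IsCut y H a b c e)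
    (hx : ∀ i, 0 ≤ x i) (hy : ∀ i, 0 ≤ y i)
    (hrig : RigidCut (Fintype.card κ) (y a) (y b) (y c) (y e))
    (hmaj : MajOn (fun f : κ → ι => ∏ j, x (f j)) (fun f => ∏ j, y (f j)))
    (hsum : ∑ i, x i = ∑ i, y i) : ∑ i ∈ H, x i ≤ ∑ i ∈ H, y i := by
  classical
  rcases hrig with hab | hce
  · have hle := hmaj.sum_le (hcut.separates_piFinset hy hab) rfl
    simp only [sum_prod_piFinset, prod_const, card_univ] at hle
    exact le_of_pow_le_pow_left₀ Fintype.card_ne_zero (sum_nonneg fun i _ => hy i) hle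
  · have hle := hmaj.le_sum_of_separates_compl (hcut.separates_compl_piFinset hy hce)
    simp only [sum_prod_piFinset, prod_const, card_univ] at hle
    have hcompl := le_of_pow_le_pow_left₀ Fintype.card_ne_zero (sum_nonneg fun i _ => hx i) hle
    linarith [sum_add_sum_compl H x, sum_add_sum_compl H y]

end Power

end Sufficiency

section Inclusions

variable {n k : ℕ} {x y : Fin n → ℝ}

lemma mem_sset_of_forall (hx : x ∈ Vn n) (hy : y ∈ Vn n)
    (h : ∀ (d : ℕ) (hd : d < n), 0 < d →
      ∑ i ∈ Iio ⟨d, hd⟩, x i ≤ ∑ i ∈ Iio ⟨d, hd⟩, y i) : x ∈ Sset y := by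
  refine ⟨hx, (maj_iff_of_antitone hx.2.2 hy.2.2).2 ⟨hx.2.1.trans hy.2.1.symm, fun ⟨d, hd⟩ => ?_⟩⟩
  rcases d.eq_zero_or_pos with rfl | hd0
  · have hempty : Iio (⟨0, hd⟩ : Fin n) = ∅ := card_eq_zero.1 (Fin.card_Iio _)
    rw [hempty, sum_empty, sum_empty]
  · exact h d hd hd0

lemma tk_subset_sset (hk : 0 < k) (hy : y ∈ Vn n)
    (h : ∀ (d : ℕ) (hd : d < n), 0 < d →
      RigidCut k (y ⟨0, by lia⟩) (y ⟨d - 1, by lia⟩) (y ⟨d, hd⟩) (y ⟨n - 1, by lia⟩)) :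
    Tk k y ⊆ Sset y := by
  rintro x ⟨hx, w, hw, -, -, hmaj⟩
  have : NeZero k := ⟨hk.ne'⟩
  refine mem_sset_of_forall hx hy fun d hd hd0 => ?_
  exact (isCut_Iio hy.2.2 hd0 hd).sum_le_of_majOn_mul hy.1 (by simpa using h d hd hd0) hw
    (maj_tensor_iff.1 hmaj) (hx.2.1.trans hy.2.1.symm)

lemma mk_subset_sset (hk : 0 < k) (hy : y ∈ Vn n)
    (h : ∀ (d : ℕ) (hd : d < n), 0 < d →
      RigidCut k (y ⟨0, by lia⟩) (y ⟨d - 1, by lia⟩) (y ⟨d, hd⟩) (y ⟨n - 1, by lia⟩)) :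
    Mk k y ⊆ Sset y := by
  rintro x ⟨hx, hmaj⟩
  have : NeZero k := ⟨hk.ne'⟩
  refine mem_sset_of_forall hx hy fun d hd hd0 => ?_
  exact (isCut_Iio hy.2.2 hd0 hd).sum_le_of_majOn_pow hx.1 hy.1 (by simpa using h d hd hd0)
    (maj_tpow_iff.1 hmaj) (hx.2.1.trans hy.2.1.symm)

lemma rigidCut_of_forall (hk : 0 < k) (hy : y ∈ Vn n)
    (h : ∀ (d : ℕ) (hd : d < n), 1 < d → d + 1 < n →
      RigidCut k (y ⟨0, by lia⟩) (y ⟨d - 1, by lia⟩) (y ⟨d, hd⟩) (y ⟨n - 1, by lia⟩))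
    {d : ℕ} (hd : d < n) (hd0 : 0 < d) :
    RigidCut k (y ⟨0, by lia⟩) (y ⟨d - 1, by lia⟩) (y ⟨d, hd⟩) (y ⟨n - 1, by lia⟩) := by
  have hstep : y ⟨d, hd⟩ ≤ y ⟨d - 1, by lia⟩ := (isCut_Iio hy.2.2 hd0 hd).c_le_b
  obtain rfl | hd1 := Nat.eq_or_lt_of_le hd0
  · exact rigidCut_of_eq_left hk (hy.1 _) hstep
  · obtain rfl | hdn := Nat.eq_or_lt_of_le hd
    · exact rigidCut_of_eq_right hk (hy.1 _) hstep
    · exact h d hd hd1 hdn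

end Inclusions

section FibreAverage

variable {ι κ β : Type*} [Fintype ι] [DecidableEq β] {π : ι → β} {u v : ι → ℝ}

/-- The family `u` arises from `v` by replacing the values on each fibre of `π` by their average;
this is expressed without division, by constancy and equality of the sums on fibres. -/
structure IsFibreAverage (π : ι → β) (u v : ι → ℝ) : Prop where
  eq_of_eq : ∀ i j, π i = π j → u i = u j
  sum_eq : ∀ b, ∑ i with π i = b, u i = ∑ i with π i = b, v i

namespace IsFibreAverage

lemma sum_eq_of_saturated (h : IsFibreAverage π u v) {s : Finset ι}
    (hs : ∀ i j, π i = π j → i ∈ s → j ∈ s) : ∑ i ∈ s, u i = ∑ i ∈ s, v i := by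
  have hmaps : ∀ i ∈ s, π i ∈ s.image π := fun i hi => mem_image_of_mem π hi
  rw [← sum_fiberwise_of_maps_to hmaps, ← sum_fiberwise_of_maps_to hmaps]
  refine sum_congr rfl fun b hb => ?_
  obtain ⟨i, hi, rfl⟩ := mem_image.1 hb
  have hfibre : ({j ∈ s | π j = π i} : Finset ι) =
      ({j | π j = π i} : Finset ι) := by
    ext j
    simpa using fun hj : π j = π i => hs i j hj.symm hi
  rw [hfibre, h.sum_eq]

lemma sum_univ_eq (h : IsFibreAverage π u v) : ∑ i, u i = ∑ i, v i :=
  h.sum_eq_of_saturated fun _ _ _ _ => mem_univ _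

lemma exists_sum_posPart_eq (h : IsFibreAverage π u v) (τ : ℝ) :
    ∃ s : Finset ι, (∀ i j, π i = π j → i ∈ s → j ∈ s) ∧
      ∑ i, (u i - τ)⁺ = ∑ i ∈ s, (v i - τ) := by
  have hsep : Separates u τ {i | τ ≤ u i} := ⟨by simp, by simpa using fun i hi => le_of_lt hi⟩
  have hsat : ∀ i j, π i = π j → i ∈ ({i | τ ≤ u i} : Finset ι) →
      j ∈ ({i | τ ≤ u i} : Finset ι) := by
    intro i j hij
    simp [h.eq_of_eq i j hij]
  refine ⟨_, hsat, ?_⟩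
  rw [← sum_sub_eq_sum_posPart_iff.2 hsep, sum_sub_distrib, sum_sub_distrib,
    h.sum_eq_of_saturated hsat]

lemma majOn (h : IsFibreAverage π u v) : MajOn u v := by
  refine ⟨h.sum_univ_eq, fun τ => ?_⟩
  obtain ⟨s, -, hs⟩ := h.exists_sum_posPart_eq τ
  exact hs.trans_le (sum_sub_le_sum_posPart v τ s)

lemma lt_apply (h : IsFibreAverage π u v) {i j : ι} {m : ℝ} (hm : ∀ l, π l = π i → m ≤ v l)
    (hij : π j = π i) (hj : m < v j) : m < u i := by
  by_contra! hle
  refine (sum_lt_sum (fun l hl => ?_) ⟨j, by simpa using hij, ?_⟩).ne (h.sum_eq (π i))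
  · have hl : π l = π i := by simpa using hl
    exact (h.eq_of_eq l i hl).trans_le (hle.trans (hm l hl))
  · exact ((h.eq_of_eq j i hij).trans_le hle).trans_lt hj

lemma apply_lt (h : IsFibreAverage π u v) {i j : ι} {m : ℝ} (hm : ∀ l, π l = π i → v l ≤ m)
    (hij : π j = π i) (hj : v j < m) : u i < m := by
  by_contra! hle
  refine (sum_lt_sum (fun l hl => ?_) ⟨j, by simpa using hij, ?_⟩).ne (h.sum_eq (π i)).symm
  · have hl : π l = π i := by simpa using hl
    exact ((hm l hl).trans hle).trans_eq (h.eq_of_eq l i hl).symm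
  · exact hj.trans_le (hle.trans_eq (h.eq_of_eq j i hij).symm)

lemma sum_posPart_lt (h : IsFibreAverage π u v) {τ : ℝ}
    (hτ : ∃ i j, π i = π j ∧ v i < τ ∧ τ < v j) : ∑ i, (u i - τ)⁺ < ∑ i, (v i - τ)⁺ := by
  obtain ⟨i, j, hij, hi, hj⟩ := hτ
  obtain ⟨s, hsat, hs⟩ := h.exists_sum_posPart_eq τ
  rw [hs]
  refine (sum_sub_le_sum_posPart v τ s).lt_of_ne fun heq => ?_
  have hsep := sum_sub_eq_sum_posPart_iff.1 heq
  by_cases his : i ∈ s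
  · exact hi.not_ge (hsep.1 i his)
  · exact hj.not_ge (hsep.2 j fun hjs => his (hsat j i hij.symm hjs))

lemma exists_sum_lt (h : IsFibreAverage π u v) {p q : ι} (hu : ∀ i, v p < u i ∧ u i < v q)
    (hcov : ∀ τ, v p < τ → τ < v q → ∃ i j, π i = π j ∧ v i < τ ∧ τ < v j)
    {s : Finset ι} (hs : s.Nonempty) (hs' : s ≠ univ) :
    ∃ t : Finset ι, #t = #s ∧ ∑ i ∈ s, u i < ∑ i ∈ t, v i := by
  obtain ⟨t, τ, ht, hsep⟩ := exists_separates_card_eq v s.card_le_univ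
  refine ⟨t, ht, ?_⟩
  suffices hinge : ∑ i ∈ s, (u i - τ) < ∑ i ∈ t, (v i - τ) by
    simpa [sum_sub_distrib, ht] using hinge
  rw [sum_sub_eq_sum_posPart_iff.2 hsep]
  have hle := sum_sub_le_sum_posPart u τ s
  by_cases hτ : v p < τ ∧ τ < v q
  · exact hle.trans_lt (h.sum_posPart_lt (hcov τ hτ.1 hτ.2))
  · refine (hle.lt_of_ne fun heq => hτ ?_).trans_le (h.majOn.2 τ)
    have husep := sum_sub_eq_sum_posPart_iff.1 heq
    obtain ⟨i, hi⟩ := hs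
    obtain ⟨j, hj⟩ : ∃ j, j ∉ s := by simpa [eq_univ_iff_forall] using hs'
    exact ⟨(hu j).1.trans_le (husep.2 j hj), (husep.1 i hi).trans_lt (hu i).2⟩

lemma eventually_majOn {X : Type*} {l : Filter X} {w : X → ι → ℝ} (h : IsFibreAverage π u v)
    {p q : ι} (hu : ∀ i, v p < u i ∧ u i < v q)
    (hcov : ∀ τ, v p < τ → τ < v q → ∃ i j, π i = π j ∧ v i < τ ∧ τ < v j)
    (hw : ∀ i, Tendsto (w · i) l (𝓝 (u i))) (hsum : ∀ x, ∑ i, w x i = ∑ i, v i) :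
    ∀ᶠ x in l, MajOn (w x) v := by
  have hev : ∀ᶠ x in l, ∀ s : Finset ι, ∃ t : Finset ι, #t = #s ∧
      ∑ i ∈ s, w x i ≤ ∑ i ∈ t, v i := by
    refine eventually_all.2 fun s => ?_
    rcases s.eq_empty_or_nonempty with rfl | hs
    · exact .of_forall fun x => ⟨∅, by simp⟩
    · by_cases hs' : s = univ
      · exact .of_forall fun x => ⟨s, rfl, by rw [hs', hsum x]⟩
      · obtain ⟨t, ht, hlt⟩ := h.exists_sum_lt hu hcov hs hs'
        filter_upwards [(tendsto_finsetSum s fun i _ => hw i).eventually_lt_const hlt] with x hx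
        exact ⟨t, ht, hx.le⟩
  filter_upwards [hev] with x hx using majOn_of_forall_exists (hsum x) hx

lemma mul_right [Fintype κ] [DecidableEq κ] (h : IsFibreAverage π u v) (w : κ → ℝ) :
    IsFibreAverage (Prod.map π id) (fun p : ι × κ => u p.1 * w p.2) fun p => v p.1 * w p.2 where
  eq_of_eq p q hpq := by
    simp only [Prod.map, Prod.mk.injEq, id_eq] at hpq
    rw [h.eq_of_eq _ _ hpq.1, hpq.2]
  sum_eq := by
    rintro ⟨b, j⟩
    have hfibre : ({p | Prod.map π id p = (b, j)} : Finset (ι × κ)) =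
        ({i | π i = b} : Finset ι) ×ˢ {j} := by
      ext p
      simp [Prod.ext_iff, eq_comm]
    simp only [hfibre, sum_product, sum_singleton, ← sum_mul, h.sum_eq]

lemma pow [Fintype κ] [DecidableEq κ] (h : IsFibreAverage π u v) :
    IsFibreAverage (fun f : κ → ι => π ∘ f) (fun f => ∏ j, u (f j)) fun f => ∏ j, v (f j) where
  eq_of_eq f g hfg := prod_congr rfl fun j _ => h.eq_of_eq _ _ (congrFun hfg j)
  sum_eq g := by
    have hfibre : ({f | π ∘ f = g} : Finset (κ → ι)) =
        Fintype.piFinset fun j => ({i | π i = g j} : Finset ι) := by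
      ext f
      simp [funext_iff]
    rw [hfibre, ← prod_univ_sum _ fun _ => u, ← prod_univ_sum _ fun _ => v]
    simp only [h.sum_eq]

end IsFibreAverage

end FibreAverage

section TwoLevel

variable {ι : Type*} [Fintype ι] [DecidableEq ι] {H : Finset ι}

/-- The vector with constant entries on `H` and on its complement obtained from `y` by averaging
on both sides and then moving mass `ε` into `H`. -/
def twoLevel (y : ι → ℝ) (H : Finset ι) (ε : ℝ) (i : ι) : ℝ :=
  if i ∈ H then (∑ j ∈ H, y j + ε) / #H else (∑ j ∈ Hᶜ, y j - ε) / #Hᶜ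

lemma continuous_twoLevel (y : ι → ℝ) (H : Finset ι) (i : ι) :
    Continuous fun ε => twoLevel y H ε i := by
  unfold twoLevel
  split_ifs <;> fun_prop

lemma sum_twoLevel_mem (hH : H.Nonempty) (y : ι → ℝ) (ε : ℝ) :
    ∑ i ∈ H, twoLevel y H ε i = ∑ i ∈ H, y i + ε := by
  unfold twoLevel
  rw [sum_congr rfl fun i hi => if_pos hi, sum_const, nsmul_eq_mul]
  exact mul_div_cancel₀ _ (by simpa using hH.ne_empty)

lemma sum_twoLevel_compl (hH : Hᶜ.Nonempty) (y : ι → ℝ) (ε : ℝ) :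
    ∑ i ∈ Hᶜ, twoLevel y H ε i = ∑ i ∈ Hᶜ, y i - ε := by
  unfold twoLevel
  rw [sum_congr rfl fun i hi => if_neg (mem_compl.1 hi), sum_const, nsmul_eq_mul]
  exact mul_div_cancel₀ _ (by exact_mod_cast hH.card_pos.ne')

lemma sum_twoLevel (hH : H.Nonempty) (hH' : Hᶜ.Nonempty) (y : ι → ℝ) (ε : ℝ) :
    ∑ i, twoLevel y H ε i = ∑ i, y i := by
  rw [← sum_add_sum_compl H, sum_twoLevel_mem hH, sum_twoLevel_compl hH', ← sum_add_sum_compl H y]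
  ring

lemma isFibreAverage_twoLevel (hH : H.Nonempty) (hH' : Hᶜ.Nonempty) (y : ι → ℝ) :
    IsFibreAverage (fun i => decide (i ∈ H)) (twoLevel y H 0) y where
  eq_of_eq i j hij := by
    rw [decide_eq_decide] at hij
    simp only [twoLevel, hij]
  sum_eq
    | true => by simpa using sum_twoLevel_mem hH y 0
    | false => by simpa [← compl_filter] using sum_twoLevel_compl hH' y 0

variable {y : ι → ℝ} {a b c e : ι}

lemma IsCut.lt_twoLevel_zero (hcut : IsCut y H a b c e) (hec : y e < y c) (i : ι) :
    y e < twoLevel y H 0 i := by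
  have havg := isFibreAverage_twoLevel ⟨a, hcut.a_mem⟩ ⟨c, mem_compl.2 hcut.c_notMem⟩ y
  by_cases hi : i ∈ H
  · exact havg.lt_apply (fun l _ => hcut.e_le_apply l) (j := b) (by simp [hi, hcut.b_mem])
      (hec.trans_le hcut.c_le_b)
  · exact havg.lt_apply (fun l _ => hcut.e_le_apply l) (j := c) (by simp [hi, hcut.c_notMem]) hec

lemma IsCut.twoLevel_zero_lt (hcut : IsCut y H a b c e) (hba : y b < y a) (i : ι) :
    twoLevel y H 0 i < y a := by
  have havg := isFibreAverage_twoLevel ⟨a, hcut.a_mem⟩ ⟨c, mem_compl.2 hcut.c_notMem⟩ y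
  by_cases hi : i ∈ H
  · exact havg.apply_lt (fun l _ => hcut.apply_le_a l) (j := b) (by simp [hi, hcut.b_mem]) hba
  · exact havg.apply_lt (fun l _ => hcut.apply_le_a l) (j := c) (by simp [hi, hcut.c_notMem])
      (hcut.c_le_b.trans_lt hba)

lemma IsCut.twoLevel_le_twoLevel (hcut : IsCut y H a b c e) {ε : ℝ} (hε : 0 ≤ ε) {i j : ι}
    (hi : i ∉ H) (hj : j ∈ H) : twoLevel y H ε i ≤ twoLevel y H ε j := by
  have hH : (0 : ℝ) < #H := by exact_mod_cast card_pos.2 ⟨a, hcut.a_mem⟩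
  have hH' : (0 : ℝ) < #Hᶜ := by exact_mod_cast card_pos.2 ⟨c, mem_compl.2 hcut.c_notMem⟩
  have hb : #H * y b ≤ ∑ l ∈ H, y l := by
    simpa using card_nsmul_le_sum H y (y b) hcut.b_le
  have hc : ∑ l ∈ Hᶜ, y l ≤ #Hᶜ * y c := by
    simpa using sum_le_card_nsmul Hᶜ y (y c) fun l hl => hcut.le_c l (mem_compl.1 hl)
  rw [twoLevel, twoLevel, if_neg hi, if_pos hj]
  calc (∑ l ∈ Hᶜ, y l - ε) / #Hᶜ ≤ y c := (div_le_iff₀' hH').2 (by linarith)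
    _ ≤ y b := hcut.c_le_b
    _ ≤ (∑ l ∈ H, y l + ε) / #H := (le_div_iff₀' hH).2 (by linarith)

end TwoLevel

section Overlap

variable {k : ℕ} {α A B C D τ : ℝ}

lemma exists_mem_Ioo_of_chain {lo hi : ℕ → ℝ} {N : ℕ} (h : ∀ p < N, lo p < hi (p + 1))
    (h0 : τ < hi 0) (hN : lo N < τ) : ∃ p ≤ N, lo p < τ ∧ τ < hi p := by
  induction N with
  | zero => exact ⟨0, le_rfl, hN, h0⟩
  | succ N ih =>
    by_cases hτ : lo N < τ
    · obtain ⟨p, hp, hp'⟩ := ih (fun p hp => h p (by lia)) hτ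
      exact ⟨p, by lia, hp'⟩
    · exact ⟨N + 1, le_rfl, hN, (not_lt.1 hτ).trans_lt (h N (by lia))⟩

lemma exists_mem_Ioo_mul_pow {γ : ℝ} (hα : 0 < α) (hγ : 0 < γ) (hBA : B < α * A) {N : ℕ}
    (hA : τ < A * γ) (hB : B * (γ * α ^ N) < τ) :
    ∃ p ≤ N, B * (γ * α ^ p) < τ ∧ τ < A * (γ * α ^ p) := by
  refine exists_mem_Ioo_of_chain (lo := fun p => B * (γ * α ^ p))
    (hi := fun p => A * (γ * α ^ p)) (fun p _ => ?_) (by simpa using hA) hB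
  calc B * (γ * α ^ p) < α * A * (γ * α ^ p) := mul_lt_mul_of_pos_right hBA (by positivity)
    _ = A * (γ * α ^ (p + 1)) := by ring

namespace IsOverlapRatio

lemma b_lt_a (h : IsOverlapRatio k α A B C D) (hA : 0 ≤ A) : B < A :=
  h.lt_upper.trans_le (mul_le_of_le_one_left hA h.lt_one.le)

lemma d_lt_c (h : IsOverlapRatio k α A B C D) (hC : 0 ≤ C) : D < C :=
  h.lt_lower.trans_le (mul_le_of_le_one_left hC h.lt_one.le)

lemma exists_mem_Ioo_mul (h : IsOverlapRatio k α A B C D) (hk : 0 < k) {γ : ℝ} (hγ : 0 < γ)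
    (hD : D * (γ * α ^ (k - 1)) < τ) (hA : τ < A * γ) :
    ∃ p < k, (B * (γ * α ^ p) < τ ∧ τ < A * (γ * α ^ p)) ∨
      (D * (γ * α ^ p) < τ ∧ τ < C * (γ * α ^ p)) := by
  by_cases hτ : B * (γ * α ^ (k - 1)) < τ
  · obtain ⟨p, hp, hmem⟩ := exists_mem_Ioo_mul_pow h.pos hγ h.lt_upper hA hτ
    exact ⟨p, by lia, Or.inl hmem⟩
  · have hC : τ < C * γ :=
      calc τ ≤ B * (γ * α ^ (k - 1)) := not_lt.1 hτ
        _ = α ^ (k - 1) * B * γ := by ring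
        _ < C * γ := mul_lt_mul_of_pos_right h.joins hγ
    obtain ⟨p, hp, hmem⟩ := exists_mem_Ioo_mul_pow h.pos hγ h.lt_lower hC hD
    exact ⟨p, by lia, Or.inr hmem⟩

lemma exists_mem_Ioo_pow (h : IsOverlapRatio k α A B C D) (hD0 : 0 ≤ D) (hB0 : 0 ≤ B)
    (hD : D ^ k < τ) (hA : τ < A ^ k) :
    ∃ p ≤ k, D ^ p * B ^ (k - p) < τ ∧ τ < C ^ p * A ^ (k - p) := by
  have hα0 := h.pos
  have hA0 : 0 < A := pos_of_mul_pos_right (hB0.trans_lt h.lt_upper) hα0.le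
  have hC0 : 0 < C := pos_of_mul_pos_right (hD0.trans_lt h.lt_lower) hα0.le
  refine exists_mem_Ioo_of_chain (lo := fun p => D ^ p * B ^ (k - p))
    (hi := fun p => C ^ p * A ^ (k - p)) (fun p hp => ?_) (by simpa using hA) (by simpa using hD)
  obtain ⟨q, rfl⟩ := Nat.exists_eq_add_of_lt hp
  have hjoins := h.joins
  simp only [show p + q + 1 - p = q + 1 by lia, show p + q + 1 - (p + 1) = q by lia,
    Nat.add_sub_cancel] at hjoins ⊢
  calc D ^ p * B ^ (q + 1) = D ^ p * B ^ q * B := by ring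
    _ ≤ (α * C) ^ p * (α * A) ^ q * B := by
      gcongr
      exacts [h.lt_lower.le, h.lt_upper.le]
    _ = C ^ p * A ^ q * (α ^ (p + q) * B) := by ring
    _ < C ^ p * A ^ q * C := by gcongr
    _ = C ^ (p + 1) * A ^ q := by ring

end IsOverlapRatio

end Overlap

section Perturbation

lemma prod_ite_val_lt {M : Type*} [CommMonoid M] {k p : ℕ} (hp : p ≤ k) (u v : M) :
    ∏ l : Fin k, (if (l : ℕ) < p then u else v) = u ^ p * v ^ (k - p) := by
  rw [prod_ite, prod_const, prod_const, filter_not, card_sdiff_of_subset (filter_subset _ _),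
    Fin.card_filter_val_lt, min_eq_right hp, card_univ, Fintype.card_fin]

lemma pow_card_lt_prod {κ : Type*} [Fintype κ] [Nonempty κ] {z : κ → ℝ} {m : ℝ} (hm : 0 ≤ m)
    (h : ∀ j, m < z j) : m ^ Fintype.card κ < ∏ j, z j := by
  rcases hm.eq_or_lt with rfl | hm
  · rw [zero_pow Fintype.card_ne_zero]
    exact prod_pos fun j _ => h j
  · rw [← card_univ, ← prod_const]
    exact prod_lt_prod_of_nonempty (fun _ _ => hm) (fun j _ => h j) univ_nonempty

variable {ι : Type*} [Fintype ι] [DecidableEq ι] {y : ι → ℝ} {H : Finset ι} {a b c e : ι}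
  {k : ℕ} {α : ℝ}

lemma IsCut.eventually_majOn_mul (hcut : IsCut y H a b c e) (hy : ∀ i, 0 ≤ y i)
    (hα : IsOverlapRatio k α (y a) (y b) (y c) (y e)) (hk : 0 < k) {γ : ℝ} (hγ : 0 < γ) :
    ∀ᶠ ε in 𝓝 0, MajOn (fun p : ι × Fin k => twoLevel y H ε p.1 * (γ * α ^ (p.2 : ℕ)))
      fun p => y p.1 * (γ * α ^ (p.2 : ℕ)) := by
  have hH : H.Nonempty := ⟨a, hcut.a_mem⟩
  have hH' : Hᶜ.Nonempty := ⟨c, mem_compl.2 hcut.c_notMem⟩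
  have hα0 := hα.pos
  have havg := (isFibreAverage_twoLevel hH hH' y).mul_right fun j : Fin k => γ * α ^ (j : ℕ)
  refine havg.eventually_majOn (p := (e, ⟨k - 1, by lia⟩)) (q := (a, ⟨0, hk⟩)) (fun p => ⟨?_, ?_⟩)
    (fun τ hτ hτ' => ?_) (fun p => ?_) fun ε => ?_
  · have hpow : α ^ (k - 1) ≤ α ^ (p.2 : ℕ) :=
      pow_le_pow_of_le_one hα0.le hα.lt_one.le (by lia)
    exact mul_lt_mul (hcut.lt_twoLevel_zero (hα.d_lt_c (hy c)) p.1) (by gcongr) (by positivity)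
      ((hy e).trans (hcut.lt_twoLevel_zero (hα.d_lt_c (hy c)) p.1).le)
  · have hpow : α ^ (p.2 : ℕ) ≤ α ^ 0 := pow_le_pow_of_le_one hα0.le hα.lt_one.le (by lia)
    exact mul_lt_mul (hcut.twoLevel_zero_lt (hα.b_lt_a (hy a)) p.1) (by gcongr) (by positivity)
      (hy a)
  · obtain ⟨p, hp, hmem | hmem⟩ := hα.exists_mem_Ioo_mul hk hγ hτ (by simpa using hτ')
    · exact ⟨(b, ⟨p, hp⟩), (a, ⟨p, hp⟩), by simp [hcut.a_mem, hcut.b_mem], hmem⟩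
    · exact ⟨(e, ⟨p, hp⟩), (c, ⟨p, hp⟩), by simp [hcut.c_notMem, hcut.e_notMem], hmem⟩
  · exact ((continuous_twoLevel y H p.1).mul continuous_const).tendsto 0
  · simp only [Fintype.sum_prod_type_right, ← sum_mul, sum_twoLevel hH hH']

lemma IsCut.eventually_majOn_pow (hcut : IsCut y H a b c e) (hy : ∀ i, 0 ≤ y i)
    (hα : IsOverlapRatio k α (y a) (y b) (y c) (y e)) (hk : 0 < k) :
    ∀ᶠ ε in 𝓝 0, MajOn (fun f : Fin k → ι => ∏ j, twoLevel y H ε (f j))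
      fun f => ∏ j, y (f j) := by
  have : NeZero k := ⟨hk.ne'⟩
  have hH : H.Nonempty := ⟨a, hcut.a_mem⟩
  have hH' : Hᶜ.Nonempty := ⟨c, mem_compl.2 hcut.c_notMem⟩
  have hlow := hcut.lt_twoLevel_zero (hα.d_lt_c (hy c))
  have hhigh := hcut.twoLevel_zero_lt (hα.b_lt_a (hy a))
  have havg := (isFibreAverage_twoLevel hH hH' y).pow (κ := Fin k)
  refine havg.eventually_majOn (p := fun _ => e) (q := fun _ => a) (fun f => ⟨?_, ?_⟩)
    (fun τ hτ hτ' => ?_) (fun f => ?_) fun ε => ?_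
  · simpa using pow_card_lt_prod (hy e) fun j => hlow (f j)
  · exact prod_lt_prod_of_nonempty (fun j _ => (hy e).trans_lt (hlow (f j)))
      (fun j _ => hhigh (f j)) univ_nonempty
  · obtain ⟨p, hp, hmem⟩ :=
      hα.exists_mem_Ioo_pow (hy e) (hy b) (by simpa using hτ) (by simpa using hτ')
    refine ⟨fun j => if (j : ℕ) < p then e else b, fun j => if (j : ℕ) < p then c else a,
      funext fun j => ?_, by simpa only [apply_ite y, prod_ite_val_lt hp] using hmem⟩
    by_cases hj : (j : ℕ) < p <;>
      simp [hj, hcut.a_mem, hcut.b_mem, hcut.c_notMem, hcut.e_notMem]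
  · exact (continuous_finsetProd _ fun j _ => continuous_twoLevel y H (f j)).tendsto 0
  · simp only [← Fintype.sum_pow, sum_twoLevel hH hH']

end Perturbation

section Strictness

variable {n k d : ℕ} {y : Fin n → ℝ}

lemma twoLevel_mem_vn (hy : y ∈ Vn n) (hd0 : 0 < d) (hd : d < n) {ε : ℝ} (hε : 0 ≤ ε)
    (hε' : ε ≤ ∑ i ∈ (Iio (⟨d, hd⟩ : Fin n))ᶜ, y i) : twoLevel y (Iio ⟨d, hd⟩) ε ∈ Vn n := by
  have hcut := isCut_Iio hy.2.2 hd0 hd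
  refine ⟨fun i => ?_, ?_, fun i j hij => ?_⟩
  · unfold twoLevel
    split_ifs
    · exact div_nonneg (add_nonneg (sum_nonneg fun i _ => hy.1 i) hε) (Nat.cast_nonneg _)
    · exact div_nonneg (sub_nonneg.2 hε') (Nat.cast_nonneg _)
  · rw [sum_twoLevel ⟨_, hcut.a_mem⟩ ⟨_, mem_compl.2 hcut.c_notMem⟩, hy.2.1]
  · by_cases hj : j ∈ Iio (⟨d, hd⟩ : Fin n)
    · have hi : i ∈ Iio (⟨d, hd⟩ : Fin n) := mem_Iio.2 (hij.trans_lt (mem_Iio.1 hj))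
      simp only [twoLevel, if_pos hi, if_pos hj, le_refl]
    · by_cases hi : i ∈ Iio (⟨d, hd⟩ : Fin n)
      · exact hcut.twoLevel_le_twoLevel hε hj hi
      · simp only [twoLevel, if_neg hi, if_neg hj, le_refl]

lemma twoLevel_notMem_sset (hy : Antitone y) (hd0 : 0 < d) (hd : d < n) {ε : ℝ} (hε : 0 < ε) :
    twoLevel y (Iio ⟨d, hd⟩) ε ∉ Sset y := by
  rintro ⟨-, hmaj⟩
  have hle := (maj_iff_majOn.1 hmaj).sum_le (separates_Iio_of_antitone hy ⟨d, hd⟩) rfl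
  rw [sum_twoLevel_mem ⟨_, (isCut_Iio hy hd0 hd).a_mem⟩] at hle
  linarith

lemma exists_mem_vn_notMem_sset (hy : y ∈ Vn n) (hd0 : 0 < d) (hd : d < n) (hpos : 0 < y ⟨d, hd⟩)
    {P : (Fin n → ℝ) → Prop} (hP : ∀ᶠ ε in 𝓝 0, P (twoLevel y (Iio ⟨d, hd⟩) ε)) :
    ∃ x ∈ Vn n, P x ∧ x ∉ Sset y := by
  have hmass : 0 < ∑ i ∈ (Iio (⟨d, hd⟩ : Fin n))ᶜ, y i :=
    sum_pos' (fun i _ => hy.1 i) ⟨⟨d, hd⟩, by simp, hpos⟩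
  have hP' : ∀ᶠ ε in 𝓝[>] 0, P (twoLevel y (Iio ⟨d, hd⟩) ε) := hP.filter_mono nhdsWithin_le_nhds
  obtain ⟨ε, hPε, hε, hε'⟩ := (hP'.and (Ioo_mem_nhdsGT hmass)).exists
  exact ⟨_, twoLevel_mem_vn hy hd0 hd hε.le hε'.le, hPε, twoLevel_notMem_sset hy.2.2 hd0 hd hε⟩

lemma exists_isOverlapRatio_of_not_rigidCut (hk : 0 < k) (hy : y ∈ Vn n) (hd0 : 0 < d) (hd : d < n)
    (h : ¬ RigidCut k (y ⟨0, by lia⟩) (y ⟨d - 1, by lia⟩) (y ⟨d, hd⟩) (y ⟨n - 1, by lia⟩)) :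
    0 < y ⟨d, hd⟩ ∧ ∃ α, IsOverlapRatio k α (y ⟨0, by lia⟩) (y ⟨d - 1, by lia⟩) (y ⟨d, hd⟩)
      (y ⟨n - 1, by lia⟩) := by
  have hcut := isCut_Iio hy.2.2 hd0 hd
  obtain ⟨α, hα⟩ := exists_isOverlapRatio h hk (hy.1 _) (hcut.e_le _ hcut.c_notMem) hcut.c_le_b
    (hcut.le_a _ hcut.b_mem)
  exact ⟨(hy.1 _).trans_lt (hα.d_lt_c (hy.1 _)), α, hα⟩

lemma rigidCut_of_tk_subset (hk : 0 < k) (hy : y ∈ Vn n) (hsub : Tk k y ⊆ Sset y) (hd0 : 0 < d)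
    (hd : d < n) :
    RigidCut k (y ⟨0, by lia⟩) (y ⟨d - 1, by lia⟩) (y ⟨d, hd⟩) (y ⟨n - 1, by lia⟩) := by
  by_contra h
  obtain ⟨hpos, α, hα⟩ := exists_isOverlapRatio_of_not_rigidCut hk hy hd0 hd h
  have hα0 := hα.pos
  have hZ : 0 < ∑ j : Fin k, α ^ (j : ℕ) :=
    sum_pos (fun j _ => pow_pos hα0 _) ⟨⟨0, hk⟩, mem_univ _⟩
  set w : Fin k → ℝ := fun j => (∑ j : Fin k, α ^ (j : ℕ))⁻¹ * α ^ (j : ℕ)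
  obtain ⟨x, hx, hmaj, hxS⟩ := exists_mem_vn_notMem_sset hy hd0 hd hpos
    (P := fun x => MajOn (fun p : Fin n × Fin k => x p.1 * w p.2) fun p => y p.1 * w p.2)
    ((isCut_Iio hy.2.2 hd0 hd).eventually_majOn_mul hy.1 hα hk (inv_pos.2 hZ))
  refine hxS (hsub ⟨hx, w, fun j => by positivity, ?_, fun i j hij => ?_,
    maj_tensor_iff.2 hmaj⟩)
  · rw [← mul_sum, inv_mul_cancel₀ hZ.ne']
  · exact mul_le_mul_of_nonneg_left (pow_le_pow_of_le_one hα0.le hα.lt_one.le hij)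
      (inv_nonneg.2 hZ.le)

lemma rigidCut_of_mk_subset (hk : 0 < k) (hy : y ∈ Vn n) (hsub : Mk k y ⊆ Sset y) (hd0 : 0 < d)
    (hd : d < n) :
    RigidCut k (y ⟨0, by lia⟩) (y ⟨d - 1, by lia⟩) (y ⟨d, hd⟩) (y ⟨n - 1, by lia⟩) := by
  by_contra h
  obtain ⟨hpos, α, hα⟩ := exists_isOverlapRatio_of_not_rigidCut hk hy hd0 hd h
  obtain ⟨x, hx, hmaj, hxS⟩ := exists_mem_vn_notMem_sset hy hd0 hd hpos
    (P := fun x => MajOn (fun f : Fin k → Fin n => ∏ j, x (f j)) fun f => ∏ j, y (f j))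
    ((isCut_Iio hy.2.2 hd0 hd).eventually_majOn_pow hy.1 hα hk)
  exact hxS (hsub ⟨hx, maj_tpow_iff.2 hmaj⟩)

end Strictness

theorem stmt1_general {n k : ℕ} (hk : 0 < k) (y : Fin n → ℝ) (hy : y ∈ Vn n) :
    List.TFAE [Tk k y = Sset y, Mk k y = Sset y,
      ∀ (d : ℕ) (hd : d < n), 1 < d → d + 1 < n →
        RigidCut k (y ⟨0, by lia⟩) (y ⟨d - 1, by lia⟩) (y ⟨d, hd⟩) (y ⟨n - 1, by lia⟩)] := by
  tfae_have 1 → 3 := fun h d hd hd1 _ =>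
    rigidCut_of_tk_subset hk hy h.subset (by lia) hd
  tfae_have 2 → 3 := fun h d hd hd1 _ =>
    rigidCut_of_mk_subset hk hy h.subset (by lia) hd
  tfae_have 3 → 1 := fun h => (tk_subset_sset hk hy fun _ hd hd0 =>
    rigidCut_of_forall hk hy h hd hd0).antisymm (sset_subset_tk hk y)
  tfae_have 3 → 2 := fun h => (mk_subset_sset hk hy fun _ hd hd0 =>
    rigidCut_of_forall hk hy h hd hd0).antisymm (sset_subset_mk hy.1)
  tfae_finish

/-- Theorem 2 of the paper. The equivalence of
`T_k(y) = S(y)`, `M_k(y) = S(y)`, and the condition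
`y_d^k ≥ y_1^{k-1} y_{d+1}` or `y_{d+1}^k ≤ y_n^{k-1} y_d` for all `1 < d < n-1`
(1-based indices in the informal statement, 0-based here). -/
theorem stmt1 {n k : ℕ} (hk : 0 < k)
    (y : Fin n → ℝ) (hy : y ∈ Vn n) (hypos : ∀ i, 0 < y i) :
    (Tk k y = Sset y ↔ Mk k y = Sset y) ∧
    (Tk k y = Sset y ↔ ∀ (d : ℕ) (hd1 : 1 < d) (hd2 : d + 1 < n),
      y ⟨d - 1, by omega⟩ ^ k ≥ y ⟨0, by omega⟩ ^ (k - 1) * y ⟨d, by omega⟩ ∨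
      y ⟨d, by omega⟩ ^ k ≤ y ⟨n - 1, by omega⟩ ^ (k - 1) * y ⟨d - 1, by omega⟩) := by
  have h := stmt1_general hk y hy
  have hcond := h.out 0 2
  exact ⟨h.out 0 1, hcond.trans
    ⟨fun g d hd1 hd2 => g d (by omega) hd1 hd2, fun g d _ hd1 hd2 => g d hd1 hd2⟩⟩

end
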